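/- Let k be a fixed positive integer. Then for every function m:ℕ→ℕ with 𝒫(n,m(n)) nonempty for all large n, limsup_{n→∞} of the probability that P_{n,m(n)} contains a non-acyclic component of order at most k (i.e. a component C with |C| ≤ k that contains a cycle) is strictly less than 1. -/

import Mathlib

/-!
The proof is a switching argument. Call an oriented edge `(w, x)` of `G` *cyclic* if `wx` is not a
bridge and its component has at most `k` vertices; a graph has a component of order at most `k` with
a cycle only if it has a cyclic pair. Given a cyclic pair `(w, x)` and a vertex `v` outside the
component of `w`, replace `wx` by `wv`. The new graph has equally many edges, and it is planar because
`K₅` and `K₃,₃` are 2-connected, so that an edge joining two components cannot help to create such a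
minor (`IsMinor.of_sup_edge`). Every cyclic pair of the new graph was already cyclic in `G`, and
`(w, x)` is lost (`cyclicPairs_switchEdge_ssubset`).

A graph with `Y` cyclic pairs admits at least `Y (n - k)` switchings. To undo a switching it
suffices to know the oriented bridge `(w, v)`, at most `2n` choices since bridges form a forest, and
the vertex `x`, one of at most `k` vertices on the side of `w`. For `n ≥ 2k` this gives
`∑_{G ∈ S} Y(G) ≤ 4k |T|` whenever switchings map the family `S` into `T` (`switch_double_count`).
Taking for both `S` and `T` all of `𝒫(n,m)`, the mean of `Y` is at most `4k`, hence `Y ≤ 8k` for at least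
half of the graphs. Taking `S = {Y = i + 1}` and `T = {Y ≤ i}` gives
`|{Y ≤ i + 1}| ≤ (1 + 4k) |{Y ≤ i}|`. So at least a proportion `1 / (2 (1 + 4k) ^ (8k))` of the
graphs has `Y = 0`, uniformly in `m` and in `n ≥ 2k`.
-/


open SimpleGraph Filter Asymptotics

/-- `H` is a minor of `G`: to each vertex of `H` we can assign a connected nonempty
branch set in `G`, pairwise disjoint, with an edge of `G` between the branch sets of
any two adjacent vertices of `H`. -/
def IsMinor {α β : Type*} (H : SimpleGraph α) (G : SimpleGraph β) : Prop :=
  ∃ f : α → Set β,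
    (∀ a, (G.induce (f a)).Connected) ∧
    (∀ a b, a ≠ b → Disjoint (f a) (f b)) ∧
    (∀ a b, H.Adj a b → ∃ u ∈ f a, ∃ v ∈ f b, G.Adj u v)

/-- A graph is planar iff it has neither a `K₅`-minor nor a `K₃,₃`-minor
(Wagner's theorem). -/
def IsPlanar {V : Type*} (G : SimpleGraph V) : Prop :=
  ¬ IsMinor (completeGraph (Fin 5)) G ∧
    ¬ IsMinor (completeBipartiteGraph (Fin 3) (Fin 3)) G

/-- The number of edges of a graph. -/
noncomputable def edgeCount {V : Type*} (G : SimpleGraph V) : ℕ :=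
  G.edgeSet.ncard

/-- The degree of a vertex. -/
noncomputable def vertexDegree {V : Type*} (G : SimpleGraph V) (v : V) : ℕ :=
  (G.neighborSet v).ncard

/-- `𝒫(n,m)`: the set of labelled planar graphs on `{1,…,n}` with exactly `m` edges. -/
def planarSet (n m : ℕ) : Set (SimpleGraph (Fin n)) :=
  {G | IsPlanar G ∧ edgeCount G = m}

/-- The probability that the uniform random planar graph `P_{n,m}` satisfies `P`. -/
noncomputable def planarProb (n m : ℕ) (P : SimpleGraph (Fin n) → Prop) : ℝ :=
  ({G ∈ planarSet n m | P G}.ncard : ℝ) / ((planarSet n m).ncard : ℝ)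

/-- The number of pendant edges (edges incident to a vertex of degree 1). -/
noncomputable def pendantCount {V : Type*} (G : SimpleGraph V) : ℕ :=
  {e ∈ G.edgeSet | ∃ v ∈ e, vertexDegree G v = 1}.ncard

/-- The set of addable non-edges of `G`: non-edges whose addition keeps the graph planar. -/
def addableSet {V : Type*} (G : SimpleGraph V) : Set (Sym2 V) :=
  {e | ¬ e.IsDiag ∧ e ∉ G.edgeSet ∧ IsPlanar (G ⊔ SimpleGraph.fromEdgeSet {e})}

/-- `add(n,m)`: the minimum number of addable non-edges over all graphs in `𝒫(n,m)`. -/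
noncomputable def addMin (n m : ℕ) : ℕ :=
  sInf ((fun G => (addableSet G).ncard) '' planarSet n m)

/-- `W` carries an induced order-preserving copy of `H` in `G`: the increasing bijection
from `{1,…,h}` to `W` is an isomorphism between `H` and the induced subgraph `G[W]`. -/
def IsOrderCopy {h n : ℕ} (H : SimpleGraph (Fin h)) (G : SimpleGraph (Fin n))
    (W : Finset (Fin n)) : Prop :=
  ∃ hW : W.card = h,
    ∀ i j : Fin h,
      H.Adj i j ↔ G.Adj ((W.orderIsoOfFin hW i : Fin n)) ((W.orderIsoOfFin hW j : Fin n))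

/-- `W` is the vertex set of a connected component of `G`. -/
def IsComponent {V : Type*} (G : SimpleGraph V) (W : Finset V) : Prop :=
  (G.induce (W : Set V)).Connected ∧ ∀ v ∈ W, ∀ u, G.Adj v u → u ∈ W

/-- The number of components of `G` admitting an order-preserving isomorphism to `H`. -/
noncomputable def numOrderComponents {h n : ℕ} (H : SimpleGraph (Fin h))
    (G : SimpleGraph (Fin n)) : ℕ :=
  {W : Finset (Fin n) | IsComponent G W ∧ IsOrderCopy H G W}.ncard

/-- The number of distinct cycles (as subgraphs, identified with their edge sets) of
length at most `k` in `S`. -/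
noncomputable def cycleCountLe {V : Type*} (S : SimpleGraph V) (k : ℕ) : ℕ :=
  {E : Set (Sym2 V) | ∃ (v : V) (c : S.Walk v v),
    c.IsCycle ∧ c.length ≤ k ∧ {e | e ∈ c.edges} = E}.ncard

open scoped Classical in
/-- The vertices of the component of `v` in `G`. -/
noncomputable def reachFinset {V : Type*} [Fintype V] (G : SimpleGraph V) (v : V) : Finset V :=
  Finset.univ.filter fun y => G.Reachable v y

theorem mem_reachFinset {V : Type*} [Fintype V] {G : SimpleGraph V} {v y : V} :
    y ∈ reachFinset G v ↔ G.Reachable v y := by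
  simp [reachFinset]

open scoped Classical in
/-- The oriented edges `(w, x)` of `G` that lie on a cycle (are not bridges) and belong to a
component of order at most `k`. -/
noncomputable def cyclicPairs {V : Type*} [Fintype V] (k : ℕ) (G : SimpleGraph V) :
    Finset (V × V) :=
  Finset.univ.filter fun p =>
    G.Adj p.1 p.2 ∧ ¬ G.IsBridge s(p.1, p.2) ∧ (reachFinset G p.1).card ≤ k

/-- The switching operation: the edge `wx` is replaced by the edge `wv`. -/
def switchEdge {V : Type*} (G : SimpleGraph V) (w x v : V) : SimpleGraph V :=
  G.deleteEdges {s(w, x)} ⊔ edge w v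

/-! ### Adding an edge between two components preserves planarity -/

theorem IsMinor.mono {α β : Type*} {K : SimpleGraph α} {G G' : SimpleGraph β} (h : G ≤ G') :
    IsMinor K G → IsMinor K G' := by
  rintro ⟨f, h1, h2, h3⟩
  refine ⟨f, fun a => (h1 a).mono ?_, h2, fun a b hab => ?_⟩
  · intro x y hxy
    exact h hxy
  · obtain ⟨u, hu, v, hv, huv⟩ := h3 a b hab
    exact ⟨u, hu, v, hv, h huv⟩

/-- If `A` is closed under adjacency in `H` and contains `u`, then a connected set of
`H + uv` meets `A` in a connected set of `H`: an excursion out of `A` leaves and returns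
through `u`. -/
theorem connected_inter_of_sup_edge {β : Type*} {H : SimpleGraph β} {u v : β} {A S : Set β}
    (hA : ∀ x y, H.Adj x y → (x ∈ A ↔ y ∈ A)) (hu : u ∈ A) (hv : v ∉ A)
    (hS : ((H ⊔ edge u v).induce S).Connected) (hne : (S ∩ A).Nonempty) :
    (H.induce (S ∩ A)).Connected := by
  obtain ⟨x, hxS, hxA⟩ := hne
  have key : ∀ y : S, ((H ⊔ edge u v).induce S).Reachable ⟨x, hxS⟩ y →
      (∀ hy : y.1 ∈ A, (H.induce (S ∩ A)).Reachable ⟨x, hxS, hxA⟩ ⟨y.1, y.2, hy⟩) ∧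
      (y.1 ∉ A → ∃ huS : u ∈ S,
        (H.induce (S ∩ A)).Reachable ⟨x, hxS, hxA⟩ ⟨u, huS, hu⟩) := by
    intro y hy
    rw [reachable_iff_reflTransGen] at hy
    induction hy with
    | refl => exact ⟨fun _ => Reachable.refl _, fun h => absurd hxA h⟩
    | @tail b c _ hbc ih =>
      have hbc' : H.Adj b.1 c.1 ∨ (edge u v).Adj b.1 c.1 := hbc
      rcases hbc' with h | h
      · have hAbc := hA _ _ h
        refine ⟨fun hc => ?_, fun hc => ih.2 (by rwa [hAbc])⟩
        have hb := hAbc.2 hc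
        refine (ih.1 hb).trans (Adj.reachable ?_)
        exact h
      · rw [edge_adj] at h
        obtain ⟨b, hbS⟩ := b
        obtain ⟨c, hcS⟩ := c
        simp only at h ih ⊢
        rcases h.1 with ⟨rfl, rfl⟩ | ⟨rfl, rfl⟩
        · exact ⟨fun hc => absurd hc hv, fun _ => ⟨hbS, ih.1 hu⟩⟩
        · exact ⟨fun _ => (ih.2 hv).2, fun hc => absurd hu hc⟩
  have : Nonempty ↥(S ∩ A) := ⟨⟨x, hxS, hxA⟩⟩
  rw [connected_iff_exists_forall_reachable]
  refine ⟨⟨x, hxS, hxA⟩, fun y => ?_⟩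
  exact (key ⟨y.1, y.2.1⟩ (hS.preconnected _ _)).1 y.2.2

/-- The connectivity of `K` that makes `K`-minor-freeness stable under adding bridges: `K` stays
connected when a vertex is deleted, and has minimum degree at least two. Connectivity of
`K - a₀` is expressed through two-colourings constant on edges. -/
def TwoConnectedLike {α : Type*} (K : SimpleGraph α) : Prop :=
  (∀ (a₀ : α) (c : α → Prop), (∀ a b, a ≠ a₀ → b ≠ a₀ → K.Adj a b → (c a ↔ c b)) →
    ∀ a b, a ≠ a₀ → b ≠ a₀ → (c a ↔ c b)) ∧
  ∀ a, ∃ b c, b ≠ c ∧ K.Adj a b ∧ K.Adj a c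

/-- An edge joining two components of `H` creates no `K`-minor: all branch sets but one lie on the
same side of the new edge, and intersecting all of them with that side gives a minor in `H`. -/
theorem IsMinor.of_sup_edge {α β : Type*} [Nonempty α] {K : SimpleGraph α} {H : SimpleGraph β}
    {u v : β} (hK : TwoConnectedLike K) (huv : ¬ H.Reachable u v)
    (h : IsMinor K (H ⊔ edge u v)) : IsMinor K H := by
  obtain ⟨f, hconn, hdis, hadj⟩ := h
  set A : Set β := {x | H.Reachable u x} with hAdef
  have hA : ∀ x y, H.Adj x y → (x ∈ A ↔ y ∈ A) := fun x y hxy =>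
    ⟨fun h => h.trans hxy.reachable, fun h => h.trans hxy.symm.reachable⟩
  have hu : u ∈ A := Reachable.refl u
  have hv : v ∉ A := huv
  have hAc : ∀ x y, H.Adj x y → (x ∈ Aᶜ ↔ y ∈ Aᶜ) := fun x y hxy => not_congr (hA x y hxy)
  have edgeCases : ∀ {x y}, (H ⊔ edge u v).Adj x y →
      H.Adj x y ∨ (x = u ∧ y = v) ∨ (x = v ∧ y = u) := by
    intro x y hxy
    rcases hxy with h | h
    · exact Or.inl h
    · rw [edge_adj] at h
      exact Or.inr h.1
  have uniq : ∀ {a b x}, x ∈ f a → x ∈ f b → a = b := by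
    intro a b x ha hb
    by_contra hab
    exact Set.disjoint_left.1 (hdis a b hab) ha hb
  have connA : ∀ a, (f a ∩ A).Nonempty → (H.induce (f a ∩ A)).Connected := fun a ha =>
    connected_inter_of_sup_edge hA hu hv (hconn a) ha
  have connB : ∀ a, (f a ∩ Aᶜ).Nonempty → (H.induce (f a ∩ Aᶜ)).Connected := fun a ha =>
    connected_inter_of_sup_edge hAc (u := v) (v := u) hv (by simpa using hu)
      (by rw [edge_comm]; exact hconn a) ha
  -- a branch set meeting both sides contains both ends of the new edge
  have straddle : ∀ a, (f a ∩ A).Nonempty → (f a ∩ Aᶜ).Nonempty → u ∈ f a ∧ v ∈ f a := by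
    rintro a ⟨x, hx, hxA⟩ ⟨y, hy, hyA⟩
    have : ∀ z : f a, ((H ⊔ edge u v).induce (f a)).Reachable ⟨x, hx⟩ z →
        z.1 ∈ A ∨ (u ∈ f a ∧ v ∈ f a) := by
      intro z hz
      rw [reachable_iff_reflTransGen] at hz
      induction hz with
      | refl => exact Or.inl hxA
      | @tail b c _ hbc ih =>
        rcases ih with ih | ih
        · have hbc' : (H ⊔ edge u v).Adj b.1 c.1 := hbc
          rcases edgeCases hbc' with h | ⟨h1, h2⟩ | ⟨h1, h2⟩
          · exact Or.inl ((hA _ _ h).1 ih)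
          · exact Or.inr ⟨h1 ▸ b.2, h2 ▸ c.2⟩
          · exact absurd (h1 ▸ ih) hv
        · exact Or.inr ih
    exact (this ⟨y, hy⟩ ((hconn a).preconnected _ _)).resolve_left hyA
  -- `a₀` is the vertex whose branch set holds `u`, if there is one
  obtain ⟨a₀, ha₀⟩ : ∃ a₀, ∀ a, a ≠ a₀ → u ∉ f a := by
    by_cases h : ∃ a, u ∈ f a
    · obtain ⟨a, ha⟩ := h
      exact ⟨a, fun b hb hub => hb (uniq hub ha)⟩
    · exact ⟨Classical.arbitrary α, fun a _ hua => h ⟨a, hua⟩⟩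
  have nonempty : ∀ a, (f a).Nonempty := fun a => by
    obtain ⟨x⟩ := (hconn a).nonempty
    exact ⟨x.1, x.2⟩
  have side : ∀ a, a ≠ a₀ → ¬ (f a ∩ A).Nonempty → f a ⊆ Aᶜ := by
    intro a _ h x hx hxA
    exact h ⟨x, hx, hxA⟩
  have side' : ∀ a, a ≠ a₀ → (f a ∩ A).Nonempty → f a ⊆ A := by
    intro a ha h x hx
    by_contra hxA
    exact ha₀ a ha (straddle a h ⟨x, hx, hxA⟩).1
  have mono := hK.1 a₀ (fun a => (f a ∩ A).Nonempty) (by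
    intro a b ha hb hab
    obtain ⟨x, hx, y, hy, hxy⟩ := hadj a b hab
    rcases edgeCases hxy with h | ⟨h1, h2⟩ | ⟨h1, h2⟩
    · constructor
      · intro h'
        exact ⟨y, hy, (hA _ _ h).1 (side' a ha h' hx)⟩
      · intro h'
        exact ⟨x, hx, (hA _ _ h).2 (side' b hb h' hy)⟩
    · exact absurd (h1 ▸ hx) (ha₀ a ha)
    · exact absurd (h2 ▸ hy) (ha₀ b hb))
  obtain ⟨b₁, b₂, hb12, hab1, hab2⟩ := hK.2 a₀
  have hb1 : b₁ ≠ a₀ := hab1.ne'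
  by_cases hside : (f b₁ ∩ A).Nonempty
  · -- all branch sets other than that of `a₀` lie in `A`
    have hall : ∀ a, a ≠ a₀ → f a ⊆ A := fun a ha => side' a ha ((mono a b₁ ha hb1).2 hside)
    have step : ∀ b, K.Adj a₀ b → ∃ x ∈ f a₀ ∩ A, ∃ y ∈ f b ∩ A, H.Adj x y := by
      intro b hab
      have hb : b ≠ a₀ := hab.ne'
      obtain ⟨x, hx, y, hy, hxy⟩ := hadj a₀ b hab
      have hyA := hall b hb hy
      rcases edgeCases hxy with h | ⟨h1, h2⟩ | ⟨h1, h2⟩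
      · exact ⟨x, ⟨hx, (hA _ _ h).2 hyA⟩, y, ⟨hy, hyA⟩, h⟩
      · exact absurd (h2 ▸ hyA) hv
      · exact absurd (h2 ▸ hy) (ha₀ b hb)
    refine ⟨fun a => f a ∩ A, fun a => connA a ?_, fun a b hab => ?_, fun a b hab => ?_⟩
    · by_cases ha : a = a₀
      · subst ha
        obtain ⟨x, hx, -⟩ := step b₁ hab1
        exact ⟨x, hx⟩
      · obtain ⟨x, hx⟩ := nonempty a
        exact ⟨x, hx, hall a ha hx⟩
    · exact (hdis a b hab).mono Set.inter_subset_left Set.inter_subset_left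
    · by_cases ha : a = a₀
      · subst ha
        exact step b hab
      by_cases hb : b = a₀
      · subst hb
        obtain ⟨x, hx, y, hy, h⟩ := step a hab.symm
        exact ⟨y, hy, x, hx, h.symm⟩
      obtain ⟨x, hx, y, hy, hxy⟩ := hadj a b hab
      rcases edgeCases hxy with h | ⟨h1, h2⟩ | ⟨h1, h2⟩
      · exact ⟨x, ⟨hx, hall a ha hx⟩, y, ⟨hy, hall b hb hy⟩, h⟩
      · exact absurd (h1 ▸ hx) (ha₀ a ha)
      · exact absurd (h2 ▸ hy) (ha₀ b hb)
  · -- all branch sets other than that of `a₀` lie outside `A`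
    have hall : ∀ a, a ≠ a₀ → f a ⊆ Aᶜ := fun a ha =>
      side a ha (fun h => hside ((mono a b₁ ha hb1).1 h))
    have step : ∀ b, K.Adj a₀ b → ∃ x ∈ f a₀ ∩ Aᶜ, ∃ y ∈ f b ∩ Aᶜ, H.Adj x y := by
      intro b hab
      have hb : b ≠ a₀ := hab.ne'
      obtain ⟨x, hx, y, hy, hxy⟩ := hadj a₀ b hab
      have hyA := hall b hb hy
      rcases edgeCases hxy with h | ⟨h1, h2⟩ | ⟨h1, h2⟩
      · exact ⟨x, ⟨hx, (hAc _ _ h).2 hyA⟩, y, ⟨hy, hyA⟩, h⟩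
      · -- the new edge would be the only exit from the branch set of `a₀`, which has two
        -- neighbouring branch sets
        exfalso
        subst h1 h2
        have hsub : ∀ z ∈ f a₀, z ∈ A := by
          intro z hz
          by_contra hzA
          have := (straddle a₀ ⟨x, hx, hu⟩ ⟨z, hz, hzA⟩).2
          exact hb (uniq hy this)
        obtain ⟨b', hb', hab'⟩ : ∃ b', b' ≠ b ∧ K.Adj a₀ b' := by
          by_cases h : b₁ = b
          · exact ⟨b₂, fun h' => hb12 (h.trans h'.symm), hab2⟩
          · exact ⟨b₁, h, hab1⟩
        obtain ⟨x', hx', y', hy', hxy'⟩ := hadj a₀ b' hab'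
        have hyA' := hall b' hab'.ne' hy'
        rcases edgeCases hxy' with h | ⟨h1, h2⟩ | ⟨h1, h2⟩
        · exact hyA' ((hA _ _ h).1 (hsub _ hx'))
        · subst h2
          exact hb' (uniq hy' hy)
        · subst h2
          exact hyA' hu
      · exact absurd (h2 ▸ hy) (ha₀ b hb)
    refine ⟨fun a => f a ∩ Aᶜ, fun a => connB a ?_, fun a b hab => ?_, fun a b hab => ?_⟩
    · by_cases ha : a = a₀
      · subst ha
        obtain ⟨x, hx, -⟩ := step b₁ hab1
        exact ⟨x, hx⟩
      · obtain ⟨x, hx⟩ := nonempty a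
        exact ⟨x, hx, hall a ha hx⟩
    · exact (hdis a b hab).mono Set.inter_subset_left Set.inter_subset_left
    · by_cases ha : a = a₀
      · subst ha
        exact step b hab
      by_cases hb : b = a₀
      · subst hb
        obtain ⟨x, hx, y, hy, h⟩ := step a hab.symm
        exact ⟨y, hy, x, hx, h.symm⟩
      obtain ⟨x, hx, y, hy, hxy⟩ := hadj a b hab
      rcases edgeCases hxy with h | ⟨h1, h2⟩ | ⟨h1, h2⟩
      · exact ⟨x, ⟨hx, hall a ha hx⟩, y, ⟨hy, hall b hb hy⟩, h⟩
      · exact absurd (h1 ▸ hx) (ha₀ a ha)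
      · exact absurd (h2 ▸ hy) (ha₀ b hb)

theorem twoConnectedLike_K5 : TwoConnectedLike (completeGraph (Fin 5)) := by
  refine ⟨fun a₀ c h a b ha hb => ?_, ?_⟩
  · by_cases hab : a = b
    · rw [hab]
    · exact h a b ha hb hab
  · intro a
    have key : ∀ a : Fin 5, a + 1 ≠ a + 2 ∧ a ≠ a + 1 ∧ a ≠ a + 2 := by decide
    exact ⟨a + 1, a + 2, key a⟩

theorem twoConnectedLike_K33 :
    TwoConnectedLike (completeBipartiteGraph (Fin 3) (Fin 3)) := by
  have other : ∀ i : Fin 3, ∃ j, j ≠ i := by decide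
  refine ⟨fun a₀ c h a b ha hb => ?_, ?_⟩
  · -- every part keeps a vertex other than `a₀`, through which two vertices of the
    -- opposite part are compared
    obtain ⟨l, hl⟩ : ∃ l : Fin 3, (Sum.inl l : Fin 3 ⊕ Fin 3) ≠ a₀ := by
      rcases a₀ with i | i
      · obtain ⟨j, hj⟩ := other i
        exact ⟨j, by simpa using hj⟩
      · exact ⟨0, by simp⟩
    obtain ⟨r, hr⟩ : ∃ r : Fin 3, (Sum.inr r : Fin 3 ⊕ Fin 3) ≠ a₀ := by
      rcases a₀ with i | i
      · exact ⟨0, by simp⟩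
      · obtain ⟨j, hj⟩ := other i
        exact ⟨j, by simpa using hj⟩
    have hlr := h _ _ hl hr (by simp)
    have all : ∀ a, a ≠ a₀ → (c a ↔ c (Sum.inl l)) := by
      rintro (i | i) hi
      · exact (h _ _ hi hr (by simp)).trans hlr.symm
      · exact h _ _ hi hl (by simp)
    exact (all a ha).trans (all b hb).symm
  · rintro (i | i)
    · exact ⟨Sum.inr 0, Sum.inr 1, by simp, by simp, by simp⟩
    · exact ⟨Sum.inl 0, Sum.inl 1, by simp, by simp, by simp⟩

theorem IsPlanar.anti {V : Type*} {G G' : SimpleGraph V} (h : G ≤ G') (hG : IsPlanar G') :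
    IsPlanar G :=
  ⟨fun hm => hG.1 (hm.mono h), fun hm => hG.2 (hm.mono h)⟩

theorem IsPlanar.sup_edge {V : Type*} {G : SimpleGraph V} {u v : V} (hG : IsPlanar G)
    (huv : ¬ G.Reachable u v) : IsPlanar (G ⊔ edge u v) :=
  ⟨fun hm => hG.1 (hm.of_sup_edge twoConnectedLike_K5 huv),
    fun hm => hG.2 (hm.of_sup_edge twoConnectedLike_K33 huv)⟩

/-! ### The switching -/

section Switch

variable {V : Type*} {k : ℕ} {G : SimpleGraph V} {w x v : V}

theorem mem_cyclicPairs [Fintype V] : (w, x) ∈ cyclicPairs k G ↔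
    G.Adj w x ∧ ¬ G.IsBridge s(w, x) ∧ (reachFinset G w).card ≤ k := by
  simp [cyclicPairs]

theorem isPlanar_switchEdge (hG : IsPlanar G) (hv : ¬ G.Reachable w v) :
    IsPlanar (switchEdge G w x v) :=
  (hG.anti (deleteEdges_le _)).sup_edge fun h => hv (h.mono (deleteEdges_le _))

theorem switchEdge_deleteEdges (hv : ¬ G.Reachable w v) :
    (switchEdge G w x v).deleteEdges {s(w, v)} = G.deleteEdges {s(w, x)} := by
  have hwv : ¬ G.Adj w v := fun h => hv h.reachable
  ext a b
  simp only [switchEdge, deleteEdges_adj, sup_adj, adj_edge, Set.mem_singleton_iff]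
  constructor
  · rintro ⟨h | h, h'⟩
    · exact h
    · exact absurd h.1.symm h'
  · intro h
    refine ⟨Or.inl h, fun h' => hwv ?_⟩
    have := h.1
    rwa [← mem_edgeSet, h', mem_edgeSet] at this

theorem edgeCount_switchEdge [Finite V] (hwx : G.Adj w x) (hv : ¬ G.Reachable w v) :
    edgeCount (switchEdge G w x v) = edgeCount G := by
  have hne : w ≠ v := fun h => hv (h ▸ Reachable.refl _)
  have hwv : ¬ G.Adj w v := fun h => hv h.reachable
  have : (switchEdge G w x v).edgeSet = insert s(w, v) (G.edgeSet \ {s(w, x)}) := by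
    rw [switchEdge, edgeSet_sup, edgeSet_edge_of_ne hne, edgeSet_deleteEdges, Set.union_singleton]
  rw [edgeCount, this, Set.ncard_insert_of_notMem (fun h => hwv h.1) (Set.toFinite _),
    Set.ncard_sdiff_singleton_add_one (by exact hwx) (Set.toFinite _), edgeCount]

theorem isBridge_switchEdge (hv : ¬ G.Reachable w v) :
    (switchEdge G w x v).IsBridge s(w, v) := by
  rw [isBridge_iff, switchEdge_deleteEdges hv]
  exact fun h => hv (h.mono (deleteEdges_le _))

theorem reachable_deleteEdges (hb : ¬ G.IsBridge s(w, x)) {a b : V} (h : G.Reachable a b) :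
    (G.deleteEdges {s(w, x)}).Reachable a b := by
  rw [isBridge_iff, not_not] at hb
  rw [reachable_iff_reflTransGen] at h
  induction h with
  | refl => exact Reachable.refl _
  | @tail b c _ hbc ih =>
    refine ih.trans ?_
    by_cases hc : s(b, c) = s(w, x)
    · rcases Sym2.eq_iff.1 hc with ⟨rfl, rfl⟩ | ⟨rfl, rfl⟩
      · exact hb
      · exact hb.symm
    · exact Adj.reachable (by simpa [deleteEdges_adj] using ⟨hbc, by simpa using hc⟩)

theorem eq_of_switchEdge_eq {G₁ G₂ : SimpleGraph V} (h1 : G₁.Adj w x) (h2 : G₂.Adj w x)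
    (hv1 : ¬ G₁.Reachable w v) (hv2 : ¬ G₂.Reachable w v)
    (h : switchEdge G₁ w x v = switchEdge G₂ w x v) : G₁ = G₂ := by
  have hd : G₁.deleteEdges {s(w, x)} = G₂.deleteEdges {s(w, x)} := by
    rw [← switchEdge_deleteEdges hv1, ← switchEdge_deleteEdges hv2, h]
  have : ∀ G : SimpleGraph V, G.Adj w x → G.deleteEdges {s(w, x)} ⊔ edge w x = G := by
    intro G hG
    ext a b
    simp only [sup_adj, deleteEdges_adj, adj_edge, Set.mem_singleton_iff]
    constructor
    · rintro (h | h)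
      · exact h.1
      · rw [← mem_edgeSet, ← h.1]
        exact hG
    · intro hab
      by_cases hc : s(a, b) = s(w, x)
      · exact Or.inr ⟨hc.symm, hab.ne⟩
      · exact Or.inl ⟨hab, hc⟩
  rw [← this G₁ h1, ← this G₂ h2, hd]

variable [Fintype V]

/-- The switching creates no new cyclic edge and no new small component with a cycle, and destroys
the cyclic pair `(w, x)`. -/
theorem cyclicPairs_switchEdge_ssubset (hwx : (w, x) ∈ cyclicPairs k G)
    (hv : ¬ G.Reachable w v) : cyclicPairs k (switchEdge G w x v) ⊂ cyclicPairs k G := by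
  have hwx' := mem_cyclicPairs.1 hwx
  have hbr := isBridge_switchEdge (x := x) hv
  have key : ∀ e ∈ (switchEdge G w x v).edgeSet, ¬ (switchEdge G w x v).IsBridge e →
      e ∈ (G.deleteEdges {s(w, x)}).edgeSet := by
    intro e he hne
    rw [← switchEdge_deleteEdges hv, edgeSet_deleteEdges]
    exact ⟨he, fun h => hne (by rw [Set.mem_singleton_iff.1 h]; exact hbr)⟩
  rw [Finset.ssubset_iff_of_subset]
  · refine ⟨(w, x), hwx, fun h => ?_⟩
    have h := mem_cyclicPairs.1 h
    have := key s(w, x) h.1 h.2.1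
    simp at this
  · rintro ⟨a, b⟩ hab
    obtain ⟨h1, h2, h3⟩ := mem_cyclicPairs.1 hab
    have hadj : G.Adj a b := deleteEdges_le _ (key s(a, b) h1 h2)
    refine mem_cyclicPairs.2 ⟨hadj, ?_, ?_⟩
    · rw [isBridge_iff_forall_cycle_notMem (by exact h1)] at h2
      push Not at h2
      obtain ⟨y, p, hp, hmem⟩ := h2
      have hp' : ∀ e ∈ p.edges, e ∈ G.edgeSet := by
        intro e he
        refine edgeSet_mono (deleteEdges_le _) (key e (p.edges_subset_edgeSet he) ?_)
        exact fun h => h.notMem_edges_of_isCycle hp he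
      intro hb
      exact hb.notMem_edges_of_isCycle (hp.transfer hp') (by simpa using hmem)
    · refine (Finset.card_le_card fun y hy => ?_).trans h3
      rw [mem_reachFinset] at hy ⊢
      exact (reachable_deleteEdges hwx'.2.1 hy).mono le_sup_left

open scoped Classical in
/-- The choices for a switching in `G`: a cyclic pair `(w, x)` and a vertex `v` outside its
component. -/
noncomputable def switchChoices (k : ℕ) (G : SimpleGraph V) : Finset ((_ : V × V) × V) :=
  (cyclicPairs k G).sigma fun p => Finset.univ.filter fun v => ¬ G.Reachable p.1 v

open scoped Classical in
/-- The data needed to undo a switching that led to `G`: an oriented bridge `(w, v)`, whose removal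
leaves `w` in a component of order at most `k`, and a vertex `x` of that component. -/
noncomputable def undoChoices (k : ℕ) (G : SimpleGraph V) : Finset ((_ : V × V) × V) :=
  (Finset.univ.filter fun p : V × V => G.Adj p.1 p.2 ∧ G.IsBridge s(p.1, p.2) ∧
      (reachFinset (G.deleteEdges {s(p.1, p.2)}) p.1).card ≤ k).sigma
    fun p => reachFinset (G.deleteEdges {s(p.1, p.2)}) p.1

theorem le_card_switchChoices :
    (cyclicPairs k G).card * (Fintype.card V - k) ≤ (switchChoices k G).card := by
  classical
  rw [switchChoices, Finset.card_sigma]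
  rw [← smul_eq_mul]
  refine Finset.card_nsmul_le_sum _ _ _ ?_
  rintro ⟨a, b⟩ hab
  have h := (mem_cyclicPairs.1 hab).2.2
  have := Finset.card_filter_add_card_filter_not (s := (Finset.univ : Finset V))
    (fun v => G.Reachable a v)
  rw [Finset.card_univ] at this
  have h' : (reachFinset G a).card = (Finset.univ.filter fun v => G.Reachable a v).card := by
    rw [reachFinset]
  simp only
  omega

open scoped Classical in
/-- The bridges of a graph form a forest, so there are fewer than `|V|` of them; each is counted
here in both orientations. -/
theorem card_bridges_le [Nonempty V] (G : SimpleGraph V) :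
    (Finset.univ.filter fun p : V × V => G.Adj p.1 p.2 ∧ G.IsBridge s(p.1, p.2)).card
      ≤ 2 * Fintype.card V := by
  let F : SimpleGraph V :=
    { Adj := fun a b => G.Adj a b ∧ G.IsBridge s(a, b)
      symm := ⟨fun a b h => ⟨h.1.symm, by rw [Sym2.eq_swap]; exact h.2⟩⟩
      loopless := ⟨fun a h => h.1.ne rfl⟩ }
  have hF : F.IsAcyclic := by
    rw [isAcyclic_iff_forall_adj_isBridge]
    intro a b hab
    exact hab.2.anti (fun _ _ h => h.1)
  obtain ⟨T, hFT, hT⟩ := Finite.exists_le_maximal hF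
  have htree : T.IsTree := isTree_iff_maximal_isAcyclic.2 ⟨inferInstance, hT⟩
  have h1 := htree.card_edgeFinset
  have h2 : (Finset.univ.filter fun p : V × V => G.Adj p.1 p.2 ∧ G.IsBridge s(p.1, p.2)).card
      ≤ 2 * T.edgeFinset.card := by
    rw [two_mul_card_edgeFinset]
    refine Finset.card_le_card fun p hp => ?_
    rw [Finset.mem_filter] at hp ⊢
    exact ⟨Finset.mem_univ _, hFT hp.2⟩
  refine h2.trans (Nat.mul_le_mul_left 2 ?_)
  rw [← h1]
  exact le_trans (le_of_eq (by congr!)) (Nat.le_succ _)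

theorem card_undoChoices_le [Nonempty V] :
    (undoChoices k G).card ≤ 2 * Fintype.card V * k := by
  classical
  rw [undoChoices, Finset.card_sigma]
  refine (Finset.sum_le_card_nsmul _ _ k ?_).trans ?_
  · intro p hp
    exact (Finset.mem_filter.1 hp).2.2.2
  · rw [smul_eq_mul]
    refine Nat.mul_le_mul_right k (le_trans (Finset.card_le_card fun p hp => ?_)
      (card_bridges_le G))
    rw [Finset.mem_filter] at hp ⊢
    exact ⟨hp.1, hp.2.1, hp.2.2.1⟩

theorem mem_switchChoices {p : (_ : V × V) × V} :
    p ∈ switchChoices k G ↔ (p.1.1, p.1.2) ∈ cyclicPairs k G ∧ ¬ G.Reachable p.1.1 p.2 := by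
  simp [switchChoices]

theorem mem_undoChoices_switchEdge (hwx : (w, x) ∈ cyclicPairs k G)
    (hv : ¬ G.Reachable w v) :
    (⟨(w, v), x⟩ : (_ : V × V) × V) ∈ undoChoices k (switchEdge G w x v) := by
  obtain ⟨h1, h2, h3⟩ := mem_cyclicPairs.1 hwx
  have hne : w ≠ v := fun h => hv (h ▸ Reachable.refl _)
  simp only [undoChoices, Finset.mem_sigma, Finset.mem_filter, Finset.mem_univ, true_and]
  rw [switchEdge_deleteEdges hv, mem_reachFinset]
  refine ⟨⟨Or.inr ?_, isBridge_switchEdge hv, le_trans (Finset.card_le_card fun y hy => ?_) h3⟩,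
    reachable_deleteEdges h2 h1.reachable⟩
  · rw [adj_edge]
    exact ⟨rfl, hne⟩
  · rw [mem_reachFinset] at hy ⊢
    exact hy.mono (deleteEdges_le _)

/-- Double counting of switchings from a family `S` into a family `T`: each `G ∈ S` admits at least
`|cyclicPairs k G| (|V| - k)` of them, and each graph of `T` arises at most `2 |V| k` times. -/
theorem switch_double_count [Nonempty V] (hn : 2 * k ≤ Fintype.card V)
    (S T : Finset (SimpleGraph V))
    (hST : ∀ G ∈ S, ∀ w x v, (w, x) ∈ cyclicPairs k G → ¬ G.Reachable w v →
      switchEdge G w x v ∈ T) :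
    ∑ G ∈ S, (cyclicPairs k G).card ≤ 4 * k * T.card := by
  classical
  have h1 : (∑ G ∈ S, (cyclicPairs k G).card) * (Fintype.card V - k) ≤
      (S.sigma fun G => switchChoices k G).card := by
    rw [Finset.card_sigma, Finset.sum_mul]
    exact Finset.sum_le_sum fun G _ => le_card_switchChoices
  have h2 : (T.sigma fun G => undoChoices k G).card ≤ T.card * (2 * Fintype.card V * k) := by
    rw [Finset.card_sigma]
    exact Finset.sum_le_card_nsmul _ _ _ fun G _ => card_undoChoices_le
  have h3 : (S.sigma fun G => switchChoices k G).card ≤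
      (T.sigma fun G => undoChoices k G).card := by
    refine Finset.card_le_card_of_injOn
      (fun q => ⟨switchEdge q.1 q.2.1.1 q.2.1.2 q.2.2, ⟨(q.2.1.1, q.2.2), q.2.1.2⟩⟩) ?_ ?_
    · rintro ⟨G, ⟨⟨w, x⟩, v⟩⟩ hq
      obtain ⟨hG, hq⟩ := Finset.mem_sigma.1 (Finset.mem_coe.1 hq)
      obtain ⟨ha, hb⟩ := mem_switchChoices.1 hq
      exact Finset.mem_coe.2
        (Finset.mem_sigma.2 ⟨hST G hG w x v ha hb, mem_undoChoices_switchEdge ha hb⟩)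
    · rintro ⟨G, ⟨⟨w, x⟩, v⟩⟩ hq ⟨G', ⟨⟨w', x'⟩, v'⟩⟩ hq' heq
      obtain ⟨hG, hq⟩ := Finset.mem_sigma.1 (Finset.mem_coe.1 hq)
      obtain ⟨ha, hb⟩ := mem_switchChoices.1 hq
      obtain ⟨hG', hq'⟩ := Finset.mem_sigma.1 (Finset.mem_coe.1 hq')
      obtain ⟨ha', hb'⟩ := mem_switchChoices.1 hq'
      simp only [Sigma.mk.injEq, Prod.mk.injEq, heq_eq_eq] at heq
      obtain ⟨h, ⟨rfl, rfl⟩, rfl⟩ := heq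
      obtain rfl := eq_of_switchEdge_eq (mem_cyclicPairs.1 ha).1 (mem_cyclicPairs.1 ha').1
        hb hb' h
      rfl
  have hpos : 0 < Fintype.card V := Fintype.card_pos
  have h4 := (h1.trans h3).trans h2
  obtain ⟨d, hd⟩ := Nat.exists_eq_add_of_le hn
  have h5 : Fintype.card V - k = k + d := by omega
  rw [h5, hd] at h4
  -- `2k + d ≤ 2(k + d)` turns the factor `2(2k + d)` into `4(k + d)`
  have h6 : T.card * (2 * (2 * k + d) * k) ≤ (4 * k * T.card) * (k + d) := by
    nlinarith [Nat.zero_le (T.card * k * d)]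
  exact Nat.le_of_mul_le_mul_right (h4.trans h6) (by omega)

end Switch

/-! ### From the double counting to the probability bound -/

theorem cyclicPairs_nonempty_of_component {V : Type*} [Fintype V] {k : ℕ} {G : SimpleGraph V}
    {W : Finset V} (hW : IsComponent G W) (hk : W.card ≤ k)
    (hc : ¬ (G.induce (W : Set V)).IsAcyclic) : (cyclicPairs k G).Nonempty := by
  rw [isAcyclic_iff_forall_adj_isBridge] at hc
  push Not at hc
  obtain ⟨a, b, hab, hbr⟩ := hc
  refine ⟨(a.1, b.1), mem_cyclicPairs.2 ⟨hab, fun h => ?_, ?_⟩⟩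
  · rw [isBridge_iff_forall_cycle_notMem (by exact hab)] at hbr
    push Not at hbr
    obtain ⟨y, p, hp, hmem⟩ := hbr
    let φ := (Embedding.induce (G := G) (W : Set V))
    have hp' : (p.map φ.toHom).IsCycle := hp.map φ.injective
    refine h.notMem_edges_of_isCycle hp' ?_
    rw [Walk.edges_map]
    exact List.mem_map.2 ⟨_, hmem, rfl⟩
  · refine (Finset.card_le_card fun y hy => ?_).trans hk
    rw [mem_reachFinset, reachable_iff_reflTransGen] at hy
    induction hy with
    | refl => exact a.2
    | tail _ h ih => exact hW.2 _ ih _ h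

/-- A proportion at least `1 / (2 (1 + 4k) ^ (8k))` of `𝒫(n,m)` (here `P`) has no cyclic pair. -/
theorem card_planar_le (k n m : ℕ) (hn0 : 0 < n) (hn : 2 * k ≤ n)
    (P : Finset (SimpleGraph (Fin n))) (hP : ∀ G, G ∈ P ↔ G ∈ planarSet n m) :
    P.card ≤ 2 * (1 + 4 * k) ^ (8 * k) * (P.filter fun G => (cyclicPairs k G).card ≤ 0).card := by
  have : Nonempty (Fin n) := ⟨⟨0, hn0⟩⟩
  have hmem : ∀ G ∈ P, ∀ w x v, (w, x) ∈ cyclicPairs k G → ¬ G.Reachable w v →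
      switchEdge G w x v ∈ P := by
    intro G hG w x v hwx hv
    obtain ⟨h1, h2⟩ := (hP G).1 hG
    exact (hP _).2 ⟨isPlanar_switchEdge h1 hv,
      (edgeCount_switchEdge (mem_cyclicPairs.1 hwx).1 hv).trans h2⟩
  -- the mean of the number of cyclic pairs is at most `4k`; Markov's inequality at `8k + 1`
  have hmean := switch_double_count (k := k) (by simpa using hn) P P hmem
  have hmarkov : (8 * k + 1) * (P.filter fun G => ¬ (cyclicPairs k G).card ≤ 8 * k).card ≤
      4 * k * P.card := by
    refine le_trans ?_ hmean
    rw [mul_comm, ← smul_eq_mul]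
    refine le_trans (Finset.card_nsmul_le_sum _ (fun G => (cyclicPairs k G).card) _ ?_)
      (Finset.sum_le_sum_of_subset (Finset.filter_subset _ _))
    intro G hG
    have := (Finset.mem_filter.1 hG).2
    omega
  have hsplit := Finset.card_filter_add_card_filter_not (s := P)
    (fun G => (cyclicPairs k G).card ≤ 8 * k)
  have hhalf : P.card ≤ 2 * (P.filter fun G => (cyclicPairs k G).card ≤ 8 * k).card := by
    nlinarith
  have hstep : ∀ i, (P.filter fun G => (cyclicPairs k G).card ≤ i + 1).card ≤
      (1 + 4 * k) * (P.filter fun G => (cyclicPairs k G).card ≤ i).card := by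
    intro i
    have h1 := switch_double_count (k := k) (by simpa using hn)
      (P.filter fun G => (cyclicPairs k G).card = i + 1)
      (P.filter fun G => (cyclicPairs k G).card ≤ i) (by
        intro G hG w x v hwx hv
        rw [Finset.mem_filter] at hG ⊢
        have := Finset.card_lt_card (cyclicPairs_switchEdge_ssubset hwx hv)
        exact ⟨hmem G hG.1 w x v hwx hv, by omega⟩)
    have h2 : (P.filter fun G => (cyclicPairs k G).card = i + 1).card ≤
        ∑ G ∈ P.filter (fun G => (cyclicPairs k G).card = i + 1), (cyclicPairs k G).card := by
      rw [Finset.card_eq_sum_ones]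
      refine Finset.sum_le_sum fun G hG => ?_
      have := (Finset.mem_filter.1 hG).2
      omega
    have h3 : (P.filter fun G => (cyclicPairs k G).card ≤ i + 1).card ≤
        (P.filter fun G => (cyclicPairs k G).card ≤ i).card +
        (P.filter fun G => (cyclicPairs k G).card = i + 1).card := by
      classical
      refine le_trans (Finset.card_le_card fun G hG => ?_) (Finset.card_union_le _ _)
      simp only [Finset.mem_union, Finset.mem_filter] at hG ⊢
      rcases Nat.le_succ_iff.1 hG.2 with h | h
      · exact Or.inl ⟨hG.1, h⟩
      · exact Or.inr ⟨hG.1, h⟩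
    linarith
  have hpow : ∀ i, (P.filter fun G => (cyclicPairs k G).card ≤ i).card ≤
      (1 + 4 * k) ^ i * (P.filter fun G => (cyclicPairs k G).card ≤ 0).card := by
    intro i
    induction i with
    | zero => simp
    | succ i ih =>
      refine (hstep i).trans ?_
      rw [pow_succ', mul_assoc]
      exact Nat.mul_le_mul_left _ ih
  rw [mul_assoc]
  exact hhalf.trans (Nat.mul_le_mul_left 2 (hpow _))

theorem nonacyclic_small_component_not_whp (k : ℕ) (hk : 0 < k) (m : ℕ → ℕ)
    (hne : ∀ᶠ n : ℕ in atTop, (planarSet n (m n)).Nonempty) :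
    limsup (fun n : ℕ =>
        planarProb n (m n) fun G => ∃ W : Finset (Fin n),
          IsComponent G W ∧ W.card ≤ k ∧ ¬ (G.induce (W : Set (Fin n))).IsAcyclic)
      atTop < 1 := by
  classical
  have hC : (0 : ℝ) < 2 * (1 + 4 * k) ^ (8 * k) := by positivity
  have hlt : 1 - 1 / (2 * (1 + 4 * k) ^ (8 * k) : ℝ) < 1 := by
    have : 0 < 1 / (2 * (1 + 4 * k) ^ (8 * k) : ℝ) := by positivity
    linarith
  refine lt_of_le_of_lt (limsup_le_of_le ?_ ?_) hlt
  · refine IsBoundedUnder.isCoboundedUnder_le (isBoundedUnder_of ⟨0, fun n => ?_⟩)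
    exact div_nonneg (Nat.cast_nonneg _) (Nat.cast_nonneg _)
  filter_upwards [hne, eventually_ge_atTop (2 * k)] with n hnon hn
  let P : Finset (SimpleGraph (Fin n)) := (Set.toFinite (planarSet n (m n))).toFinset
  have hP : ∀ G, G ∈ P ↔ G ∈ planarSet n (m n) := fun G => by simp [P]
  have hcard := card_planar_le k n (m n) (by omega) hn P hP
  set Z := P.filter fun G => (cyclicPairs k G).card ≤ 0 with hZ
  have hPn : (planarSet n (m n)).ncard = P.card := by
    rw [← Set.ncard_coe_finset]
    congr 1
    ext G
    simp [hP]
  have hbad : {G ∈ planarSet n (m n) | ∃ W : Finset (Fin n), IsComponent G W ∧ W.card ≤ k ∧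
      ¬ (G.induce (W : Set (Fin n))).IsAcyclic}.ncard ≤ (P \ Z).card := by
    rw [← Set.ncard_coe_finset]
    refine Set.ncard_le_ncard ?_ (Set.toFinite _)
    rintro G ⟨hG, W, hW, hWk, hWc⟩
    have := (cyclicPairs_nonempty_of_component hW hWk hWc).card_pos
    simp only [Finset.coe_sdiff, Set.mem_sdiff, Finset.mem_coe, hP, hZ, Finset.mem_filter, not_and]
    exact ⟨hG, fun _ => by omega⟩
  have hZP : (P \ Z).card + Z.card = P.card :=
    Finset.card_sdiff_add_card_eq_card (Finset.filter_subset _ _)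
  have hPpos : (0 : ℝ) < P.card := by
    obtain ⟨G, hG⟩ := hnon
    exact_mod_cast Finset.card_pos.2 ⟨G, (hP G).2 hG⟩
  have hcardR : (P.card : ℝ) ≤ 2 * (1 + 4 * k) ^ (8 * k) * Z.card := by exact_mod_cast hcard
  have hZPR : ((P \ Z).card : ℝ) + Z.card = P.card := by exact_mod_cast hZP
  have hbadR := (Nat.cast_le (α := ℝ)).2 hbad
  rw [planarProb, hPn, div_le_iff₀ hPpos]
  have h1 : 1 / (2 * (1 + 4 * k) ^ (8 * k) : ℝ) * P.card ≤ Z.card := by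
    rw [one_div, inv_mul_le_iff₀ hC]
    exact hcardR
  linarith
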